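/- In the operator (spectral) sense on S, one has M_0 + M_1 = M, and there exists a constant c independent of h and p such that K_0 + K_1 ≤ c·K, where all summands are positive semidefinite; consequently K_β ≤ c·K and M_β ≤ M for β ∈ {0,1}. -/

import Mathlib

noncomputable section

open MeasureTheory Set

namespace SplineMG

/-- The `j`-th piece of the uniform partition of `[0,1]` into `m` subintervals of
length `h = 1/m`; the first and last pieces are extended to `-∞` resp. `+∞`
(the spline is extended polynomially outside `[0,1]`). -/
def pieceSet (m j : ℕ) : Set ℝ :=
  (if j = 0 then Iic ((1 : ℝ) / m) else Icc ((j : ℝ) / m) (((j : ℝ) + 1) / m)) ∪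
  (if j = m - 1 then Ici (((m : ℝ) - 1) / m) else ∅)

/-- `u : ℝ → ℝ` belongs to the univariate spline space `S` of degree `p` and maximal
smoothness `C^{p-1}` on the uniform partition of `(0,1)` into `m` intervals of
length `h = 1/m`. -/
def IsSpline (m p : ℕ) (u : ℝ → ℝ) : Prop :=
  ContDiffOn ℝ (p - 1 : ℕ) u (Ioo (0 : ℝ) 1) ∧
  ∀ j < m, ∃ q : Polynomial ℝ, q.natDegree ≤ p ∧ ∀ x ∈ pieceSet m j, u x = q.eval x

/-- `u` belongs to the subspace `S₀` of `S`: all odd derivatives of order `< p`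
vanish at both endpoints. -/
def IsSpline0 (m p : ℕ) (u : ℝ → ℝ) : Prop :=
  IsSpline m p u ∧
  ∀ l : ℕ, 2 * l + 1 < p →
    iteratedDeriv (2 * l + 1) u 0 = 0 ∧ iteratedDeriv (2 * l + 1) u 1 = 0

/-- The `L²(0,1)` inner product. -/
def ip0 (u v : ℝ → ℝ) : ℝ := ∫ x in Ioo (0 : ℝ) 1, u x * v x

/-- The squared `L²(0,1)` norm `‖u‖₀²`. -/
def l2normSq (u : ℝ → ℝ) : ℝ := ∫ x in Ioo (0 : ℝ) 1, u x ^ 2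

/-- The `L²(0,1)` norm `‖u‖₀`. -/
def l2norm (u : ℝ → ℝ) : ℝ := Real.sqrt (l2normSq u)

/-- The squared `H¹(0,1)` seminorm `|u|₁²`. -/
def h1semiSq (u : ℝ → ℝ) : ℝ := ∫ x in Ioo (0 : ℝ) 1, deriv u x ^ 2

/-- The `H¹(0,1)` seminorm `|u|₁`. -/
def h1semi (u : ℝ → ℝ) : ℝ := Real.sqrt (h1semiSq u)

/-- The squared full `H¹(0,1)` norm. -/
def h1normSq (u : ℝ → ℝ) : ℝ := l2normSq u + h1semiSq u

/-- `u` belongs to `S₁`, the `L²(0,1)`-orthogonal complement of `S₀` in `S`. -/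
def IsSpline1 (m p : ℕ) (u : ℝ → ℝ) : Prop :=
  IsSpline m p u ∧ ∀ v, IsSpline0 m p v → ip0 u v = 0

/-- `v = Q₀ u` is the `L²(0,1)`-orthogonal projection of `u` onto `S₀`. -/
def IsL2Proj0 (m p : ℕ) (u v : ℝ → ℝ) : Prop :=
  IsSpline0 m p v ∧ ∀ w, IsSpline0 m p w → ip0 (u - v) w = 0

/-- The component predicate: `false ↦ S₀`, `true ↦ S₁`. -/
def IsSplineC (m p : ℕ) : Bool → (ℝ → ℝ) → Prop
  | false => IsSpline0 m p
  | true => IsSpline1 m p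

/-- The tensor-product spline space `S^d = S ⊗ ⋯ ⊗ S` on `(0,1)^d`. -/
def TensorSpline (d m p : ℕ) : Submodule ℝ ((Fin d → ℝ) → ℝ) :=
  Submodule.span ℝ {u | ∃ f : Fin d → ℝ → ℝ, (∀ i, IsSpline m p (f i)) ∧
    u = fun x => ∏ i, f i (x i)}

/-- The subspace `S_α = S_{α₁} ⊗ ⋯ ⊗ S_{α_d}` of `S^d`, for `α ∈ {0,1}^d`
(`false ↦ 0`, `true ↦ 1`). -/
def TensorSplineSub (d m p : ℕ) (α : Fin d → Bool) : Submodule ℝ ((Fin d → ℝ) → ℝ) :=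
  Submodule.span ℝ {u | ∃ f : Fin d → ℝ → ℝ, (∀ i, IsSplineC m p (α i) (f i)) ∧
    u = fun x => ∏ i, f i (x i)}

/-- The open unit cube `Ω = (0,1)^d`. -/
def cube (d : ℕ) : Set (Fin d → ℝ) := Set.univ.pi fun _ => Ioo (0 : ℝ) 1

/-- The `i`-th partial derivative. -/
def pd (d : ℕ) (i : Fin d) (u : (Fin d → ℝ) → ℝ) : (Fin d → ℝ) → ℝ :=
  fun x => deriv (fun t => u (Function.update x i t)) (x i)

/-- The `L²(Ω)` inner product on the unit cube. -/
def ipd (d : ℕ) (u v : (Fin d → ℝ) → ℝ) : ℝ := ∫ x in cube d, u x * v x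

/-- The squared `L²(Ω)` norm. -/
def l2normSqD (d : ℕ) (u : (Fin d → ℝ) → ℝ) : ℝ := ∫ x in cube d, u x ^ 2

/-- The bilinear form `a(u,v) = ∫_Ω (∇u·∇v + uv) dx`. -/
def aForm (d : ℕ) (u v : (Fin d → ℝ) → ℝ) : ℝ :=
  ∫ x in cube d, (∑ i, pd d i u x * pd d i v x) + u x * v x

/-- The squared `H¹(Ω)` seminorm. -/
def h1semiSqD (d : ℕ) (u : (Fin d → ℝ) → ℝ) : ℝ :=
  ∫ x in cube d, ∑ i, pd d i u x ^ 2

/-- The squared full `H¹(Ω)` norm. -/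
def h1normSqD (d : ℕ) (u : (Fin d → ℝ) → ℝ) : ℝ := l2normSqD d u + h1semiSqD d u

/-- `v = Q_α u` is the `L²(Ω)`-orthogonal projection of `u` onto `S_α`. -/
def IsL2ProjSub (d m p : ℕ) (α : Fin d → Bool) (u v : (Fin d → ℝ) → ℝ) : Prop :=
  v ∈ TensorSplineSub d m p α ∧ ∀ w ∈ TensorSplineSub d m p α, ipd d (u - v) w = 0

/-- The coarse tensor-product spline space `(S_c)^d` (with `m/2` knot spans of
width `2h` per direction). -/
def TensorSplineCoarse (d m p : ℕ) : Submodule ℝ ((Fin d → ℝ) → ℝ) :=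
  TensorSpline d (m / 2) p

/-- `v = T_c u` is the `a(·,·)`-orthogonal (Galerkin) projection of `u` onto `(S_c)^d`. -/
def IsGalerkinCoarseProj (d m p : ℕ) (u v : (Fin d → ℝ) → ℝ) : Prop :=
  v ∈ TensorSplineCoarse d m p ∧ ∀ w ∈ TensorSplineCoarse d m p, aForm d (u - v) w = 0

end SplineMG

namespace SplineMG

/-! ### piecewise polynomials in local coordinates -/

abbrev PP := ℕ → Polynomial ℝ

def II : Polynomial ℝ →ₗ[ℝ] ℝ where
  toFun q := ∫ t in (0:ℝ)..1, q.eval t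
  map_add' a b := by
    simp only [Polynomial.eval_add]
    exact intervalIntegral.integral_add (a.continuous.intervalIntegrable _ _)
      (b.continuous.intervalIntegrable _ _)
  map_smul' c a := by
    simp [intervalIntegral.integral_const_mul]

lemma II_apply (q : Polynomial ℝ) : II q = ∫ t in (0:ℝ)..1, q.eval t := rfl

lemma II_deriv (q : Polynomial ℝ) : II q.derivative = q.eval 1 - q.eval 0 := by
  rw [II_apply]
  exact intervalIntegral.integral_eq_sub_of_hasDerivAt (fun x _ => q.hasDerivAt x)
    (q.derivative.continuous.intervalIntegrable _ _)

lemma II_mono {a b : Polynomial ℝ} (h : ∀ t ∈ Icc (0:ℝ) 1, a.eval t ≤ b.eval t) :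
    II a ≤ II b :=
  intervalIntegral.integral_mono_on zero_le_one (a.continuous.intervalIntegrable _ _)
      (b.continuous.intervalIntegrable _ _) h

lemma II_sq_nonneg (q : Polynomial ℝ) : 0 ≤ II (q * q) := by
  have := II_mono (a := 0) (b := q * q) (fun t _ => by simp [mul_self_nonneg])
  simpa using this

lemma II_sq_eq_zero {q : Polynomial ℝ} (h : II (q * q) = 0) : q = 0 := by
  by_contra hq
  have hc : ContinuousOn (fun t => (q * q).eval t) (Icc (0:ℝ) 1) := (q * q).continuous.continuousOn
  have hex : ∃ c ∈ Icc (0:ℝ) 1, 0 < (q*q).eval c := by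
    by_contra hne
    push Not at hne
    apply hq
    apply Polynomial.eq_zero_of_infinite_isRoot
    refine (Icc_infinite (zero_lt_one (α := ℝ))).mono ?_
    intro t ht
    have := hne t ht
    simp only [Polynomial.eval_mul] at this
    have h2 : q.eval t * q.eval t = 0 := le_antisymm this (mul_self_nonneg _)
    simpa using h2
  have := intervalIntegral.integral_pos (zero_lt_one (α := ℝ)) hc
    (fun t _ => by simp [mul_self_nonneg]) hex
  rw [II_apply] at h
  linarith

lemma II_poincare (q : Polynomial ℝ) (h0 : q.eval 0 = 0) :
    II (q * q) ≤ 4 * II (q.derivative * q.derivative) := by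
  have h1 : II (Polynomial.derivative ((Polynomial.X - 1) * (q * q))) = 0 := by
    rw [II_deriv]; simp [h0]
  have h2 : Polynomial.derivative ((Polynomial.X - 1) * (q * q)) =
      q * q - (2:ℝ) • ((1 - Polynomial.X) * (q * q.derivative)) := by
    have hC2 : (Polynomial.C (2:ℝ)) = 2 := rfl
    simp [Polynomial.smul_eq_C_mul, hC2]
    ring
  have h3 : II ((2:ℝ) • ((1 - Polynomial.X) * (q * q.derivative))) ≤
      II ((1/2 : ℝ) • (q * q) + (2:ℝ) • (q.derivative * q.derivative)) := by
    apply II_mono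
    intro t ht
    simp
    set a := q.eval t
    set b := q.derivative.eval t
    have : (1 - t)^2 ≤ 1 := by nlinarith [ht.1, ht.2]
    nlinarith [sq_nonneg (a - 2 * (1-t) * b), mul_nonneg (sub_nonneg.2 this) (sq_nonneg b)]
  rw [h2, map_sub] at h1
  simp only [map_add, map_smul, smul_eq_mul] at h3 h1
  linarith

lemma II_inverse (q : Polynomial ℝ) (h : q.derivative.derivative = 0) :
    II (q.derivative * q.derivative) ≤ 12 * II (q * q) := by
  obtain ⟨b, hb⟩ : ∃ b : ℝ, q.derivative = Polynomial.C b :=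
    ⟨_, Polynomial.eq_C_of_derivative_eq_zero h⟩
  obtain ⟨a, ha⟩ : ∃ a : ℝ, q = Polynomial.C a + Polynomial.C b * Polynomial.X := by
    have : (q - Polynomial.C b * Polynomial.X).derivative = 0 := by simp [hb]
    exact ⟨_, by rw [← Polynomial.eq_C_of_derivative_eq_zero this]; ring⟩
  have e1 : II (q.derivative * q.derivative) = b * b := by
    rw [hb, II_apply]; simp
  have e2 : q * q = Polynomial.derivative
      (Polynomial.C (a*a) * Polynomial.X + Polynomial.C (a*b) * Polynomial.X^2
        + Polynomial.C (b*b/3) * Polynomial.X^3) := by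
    generalize hc : b*b/3 = c
    have hc' : (Polynomial.C b : Polynomial ℝ) * Polynomial.C b = 3 * Polynomial.C c := by
      rw [show (3 : Polynomial ℝ) = Polynomial.C 3 from rfl, ← Polynomial.C_mul, ← Polynomial.C_mul,
        ← hc]
      congr 1; ring
    have hC2 : (Polynomial.C (2:ℝ)) = 2 := rfl
    have hC3 : (Polynomial.C (3:ℝ)) = 3 := rfl
    rw [ha]
    simp only [Polynomial.derivative_add, Polynomial.derivative_C_mul, Polynomial.derivative_X_pow,
      Polynomial.derivative_X, Nat.cast_ofNat, hC2, hC3]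
    simp only [Polynomial.C_mul]
    linear_combination (Polynomial.X^2) * hc'
  rw [e1, e2, II_deriv]
  simp
  nlinarith [sq_nonneg (a + b/2)]

def ip (m : ℕ) : PP →ₗ[ℝ] PP →ₗ[ℝ] ℝ :=
  LinearMap.mk₂ ℝ (fun f g => ∑ j ∈ Finset.range m, II (f j * g j))
    (by intro a b c; simp [add_mul, Finset.sum_add_distrib])
    (by intro a b c; simp [Finset.mul_sum])
    (by intro a b c; simp [mul_add, Finset.sum_add_distrib])
    (by intro a b c; simp [Finset.mul_sum])

lemma ip_apply (m : ℕ) (f g : PP) : ip m f g = ∑ j ∈ Finset.range m, II (f j * g j) := rfl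

lemma ip_comm (m : ℕ) (f g : PP) : ip m f g = ip m g f := by
  simp [ip_apply, mul_comm]

lemma ip_nonneg (m : ℕ) (f : PP) : 0 ≤ ip m f f := by
  rw [ip_apply]
  exact Finset.sum_nonneg fun _ _ => II_sq_nonneg _

/-- weighted Young inequality -/
lemma ip_young (m : ℕ) (f g : PP) {s : ℝ} (hs : 0 < s) :
    2 * |ip m f g| ≤ s * ip m f f + s⁻¹ * ip m g g := by
  have h1 := ip_nonneg m (s • f + g)
  have h2 := ip_nonneg m (s • f - g)
  simp only [map_add, map_sub, map_smul, LinearMap.add_apply, LinearMap.sub_apply,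
    LinearMap.smul_apply, smul_eq_mul, ip_comm m g f] at h1 h2
  have e : s * ip m f f + s⁻¹ * ip m g g = s⁻¹ * (s * (s * ip m f f) + ip m g g) := by
    field_simp
  have k : ∀ x : ℝ, x = s⁻¹ * (s * x) := fun x => by field_simp
  rw [e, k (2 * |ip m f g|)]
  apply mul_le_mul_of_nonneg_left _ (inv_pos.2 hs).le
  rcases abs_cases (ip m f g) with ⟨h, _⟩ | ⟨h, _⟩ <;> rw [h] <;> nlinarith

def DD : PP →ₗ[ℝ] PP where
  toFun f j := (f j).derivative
  map_add' _ _ := by ext1; simp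
  map_smul' _ _ := by ext1; simp

@[simp] lemma DD_apply (f : PP) (j : ℕ) : DD f j = (f j).derivative := rfl

/-- vanishing beyond the mesh -/
def ZZ (m : ℕ) : Submodule ℝ PP where
  carrier := {f | ∀ j, m ≤ j → f j = 0}
  zero_mem' := by intro j _; rfl
  add_mem' := by intro a b ha hb j hj; simp [ha j hj, hb j hj]
  smul_mem' := by intro c a ha j hj; simp [ha j hj]

/-- continuity at the inner knots -/
def CC (m : ℕ) : Submodule ℝ PP where
  carrier := {f | ∀ j, j + 1 < m → (f j).eval 1 = (f (j+1)).eval 0}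
  zero_mem' := by intro j _; simp
  add_mem' := by intro a b ha hb j hj; simp [ha j hj, hb j hj]
  smul_mem' := by intro c a ha j hj; simp [ha j hj]

/-- zero boundary values -/
def BB (m : ℕ) : Submodule ℝ PP where
  carrier := {f | (f 0).eval 0 = 0 ∧ (f (m-1)).eval 1 = 0}
  zero_mem' := by simp
  add_mem' := by rintro a b ⟨h1, h2⟩ ⟨h3, h4⟩; constructor <;> simp [*]
  smul_mem' := by rintro c a ⟨h1, h2⟩; constructor <;> simp [*]

/-- `AB m p false` is `S₀`, `AB m p true` is the analogous space with vanishing even derivatives. -/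
def AB (m : ℕ) : ℕ → Bool → Submodule ℝ PP
  | 0, _ => ZZ m ⊓ LinearMap.ker DD
  | p+1, b => ZZ m ⊓ CC m ⊓ (if b then BB m else ⊤) ⊓ (AB m p (!b)).comap DD

lemma ZZ_DD {m : ℕ} {f : PP} (h : f ∈ ZZ m) : DD f ∈ ZZ m := by
  intro j hj; simp [h j hj]

lemma AB_ZZ {m p : ℕ} {b : Bool} {f : PP} (h : f ∈ AB m p b) : f ∈ ZZ m := by
  cases p with
  | zero => exact h.1
  | succ p => exact h.1.1.1

lemma AB_succ_iff {m p : ℕ} {b : Bool} {f : PP} : f ∈ AB m (p+1) b ↔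
    f ∈ ZZ m ∧ f ∈ CC m ∧ (b = true → f ∈ BB m) ∧ DD f ∈ AB m p (!b) := by
  cases b <;> simp [AB, Submodule.mem_inf, and_assoc]

lemma AB_iff {m : ℕ} {f : PP} : ∀ {p : ℕ} {b : Bool}, f ∈ AB m p b ↔
    f ∈ ZZ m ∧ (DD^[p+1]) f = 0 ∧ ∀ k < p, (DD^[k]) f ∈ CC m ∧
      ((b = true ↔ Even k) → (DD^[k]) f ∈ BB m) := by
  intro p
  induction p generalizing f with
  | zero => intro b; simp [AB, Submodule.mem_inf]
  | succ p ih =>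
    intro b
    rw [AB_succ_iff, ih]
    constructor
    · rintro ⟨h1, h2, h3, h4, h5, h6⟩
      refine ⟨h1, h5, ?_⟩
      intro k hk
      cases k with
      | zero => exact ⟨h2, by simpa using h3⟩
      | succ k =>
        obtain ⟨h7, h8⟩ := h6 k (by omega)
        refine ⟨h7, fun h => h8 ?_⟩
        cases b <;> simp_all [Nat.even_add_one]
    · rintro ⟨h1, h2, h3⟩
      refine ⟨h1, (h3 0 (by omega)).1, fun h => (h3 0 (by omega)).2 (by simp [h]), ZZ_DD h1, h2, ?_⟩
      intro k hk
      obtain ⟨h7, h8⟩ := h3 (k+1) (by omega)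
      refine ⟨h7, fun h => h8 ?_⟩
      cases b <;> simp_all [Nat.even_add_one]

lemma telescope {m : ℕ} (hm : 1 ≤ m) {f : PP} (h : f ∈ CC m) :
    ∑ j ∈ Finset.range m, II (DD f j) = (f (m-1)).eval 1 - (f 0).eval 0 := by
  obtain ⟨n, rfl⟩ : ∃ n, m = n + 1 := ⟨m - 1, by omega⟩
  clear hm
  simp only [DD_apply, II_deriv, Nat.add_sub_cancel]
  have : ∀ k ≤ n, ∑ j ∈ Finset.range (k+1), ((f j).eval 1 - (f j).eval 0)
      = (f k).eval 1 - (f 0).eval 0 := by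
    intro k
    induction k with
    | zero => simp
    | succ k ih =>
      intro hk
      rw [Finset.sum_range_succ, ih (by omega), h k (by omega)]; ring
  exact this n le_rfl

lemma ibp {m : ℕ} (hm : 1 ≤ m) {f g : PP} (hf : f ∈ CC m) (hg : g ∈ CC m)
    (hb : f ∈ BB m ∨ g ∈ BB m) : ip m (DD f) g = - ip m f (DD g) := by
  have h : f * g ∈ CC m := by
    intro j hj; simp [hf j hj, hg j hj]
  have h1 := telescope hm h
  have h2 : ∑ j ∈ Finset.range m, II (DD (f*g) j) = ip m (DD f) g + ip m f (DD g) := by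
    simp [ip_apply, ← Finset.sum_add_distrib]
  have h3 : ((f*g) (m-1)).eval 1 - ((f*g) 0).eval 0 = 0 := by
    rcases hb with ⟨a, b⟩ | ⟨a, b⟩ <;> simp [a, b]
  linarith

/-- inverse inequality -/
lemma inverse_ineq {m : ℕ} (hm : 1 ≤ m) : ∀ (p : ℕ) (b : Bool) (f : PP), f ∈ AB m (p+1) b →
    ip m (DD f) (DD f) ≤ 12 * ip m f f := by
  intro p
  induction p with
  | zero =>
    intro b f hf
    rw [AB_succ_iff] at hf
    obtain ⟨_, _, _, _, h⟩ := hf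
    rw [ip_apply, ip_apply, Finset.mul_sum]
    apply Finset.sum_le_sum
    intro j _
    exact II_inverse _ (congrFun h j)
  | succ p ih =>
    intro b f hf
    rw [AB_succ_iff] at hf
    obtain ⟨_, h2, h3, h4⟩ := hf
    have h5 := ih _ _ h4
    rw [AB_succ_iff] at h4
    obtain ⟨_, h6, h7, _⟩ := h4
    have h8 := ibp hm h2 h6 (by cases b <;> simp_all)
    have h9 := ip_young m f (DD (DD f)) (s := 12) (by norm_num)
    have := neg_abs_le (ip m f (DD (DD f)))
    linarith

def prim (q : Polynomial ℝ) : Polynomial ℝ :=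
  ∑ i ∈ Finset.range (q.natDegree + 1), Polynomial.C (q.coeff i / (i+1)) * Polynomial.X^(i+1)

lemma prim_deriv (q : Polynomial ℝ) : (prim q).derivative = q := by
  conv_rhs => rw [q.as_sum_range_C_mul_X_pow]
  simp only [prim, Polynomial.derivative_sum]
  apply Finset.sum_congr rfl
  intro i _
  rw [Polynomial.derivative_C_mul_X_pow]
  have : ((i:ℝ)+1) ≠ 0 := by positivity
  simp [this]

lemma prim_zero (q : Polynomial ℝ) : (prim q).eval 0 = 0 := by
  simp [prim, Polynomial.eval_finsetSum]

def anti (m : ℕ) (f : PP) : PP := fun j =>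
  if j < m then prim (f j) + Polynomial.C (∑ i ∈ Finset.range j, II (f i)) else 0

lemma anti_ZZ (m : ℕ) (f : PP) : anti m f ∈ ZZ m := by
  intro j hj; simp [anti, not_lt.2 hj]

lemma DD_anti {m : ℕ} {f : PP} (hf : f ∈ ZZ m) : DD (anti m f) = f := by
  funext j
  by_cases h : j < m
  · simp [anti, h, prim_deriv]
  · simp [anti, h, hf j (not_lt.1 h)]

lemma prim_one (q : Polynomial ℝ) : (prim q).eval 1 = II q := by
  have := II_deriv (prim q)
  rw [prim_deriv, prim_zero] at this
  linarith

lemma anti_CC (m : ℕ) (f : PP) : anti m f ∈ CC m := by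
  intro j hj
  simp [anti, hj, (by omega : j < m), prim_one, prim_zero, Finset.sum_range_succ, Polynomial.eval_finsetSum,
    add_comm]

lemma anti_left {m : ℕ} (hm : 1 ≤ m) (f : PP) : (anti m f 0).eval 0 = 0 := by
  simp [anti, (by omega : 0 < m), prim_zero]

/-- the constant function one -/
def one (m : ℕ) : PP := fun j => if j < m then 1 else 0

lemma anti_right {m : ℕ} (hm : 1 ≤ m) {f : PP} (hf : f ∈ ZZ m) :
    (anti m f (m-1)).eval 1 = ip m f (one m) := by
  have := telescope hm (anti_CC m f)
  rw [DD_anti hf, anti_left hm] at this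
  rw [← sub_zero (Polynomial.eval _ _), ← this, ip_apply]
  apply Finset.sum_congr rfl
  intro j hj
  simp [one, Finset.mem_range.1 hj]

lemma one_ZZ (m : ℕ) : one m ∈ ZZ m := by
  intro j hj; simp [one, not_lt.2 hj]
lemma one_CC (m : ℕ) : one m ∈ CC m := by
  intro j hj; simp [one, hj, (by omega : j < m)]
lemma DD_one (m : ℕ) : DD (one m) = 0 := by
  funext j; simp only [one, DD_apply]; split_ifs <;> simp

lemma one_AB (m p : ℕ) : one m ∈ AB m p false := by
  cases p with
  | zero => exact ⟨one_ZZ m, DD_one m⟩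
  | succ p =>
    rw [AB_succ_iff]
    exact ⟨one_ZZ m, one_CC m, by simp, by rw [DD_one]; exact zero_mem _⟩

lemma AB_natDegree {m p : ℕ} {b : Bool} {f : PP} (h : f ∈ AB m p b) (j : ℕ) :
    (f j).natDegree < p + 1 := by
  have h2 := congrFun (AB_iff.1 h).2.1 j
  have h3 : ∀ k, (DD^[k]) f j = Polynomial.derivative^[k] (f j) := by
    intro k
    induction k with
    | zero => rfl
    | succ k ih => rw [Function.iterate_succ_apply', Function.iterate_succ_apply', ← ih]; rfl
  rw [h3] at h2
  apply Nat.lt_succ_of_le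
  rw [Polynomial.natDegree_le_iff_coeff_eq_zero]
  intro N hN
  have h4 := congrArg (fun q => Polynomial.coeff q (N - (p+1))) h2
  simp only [Polynomial.coeff_iterate_derivative] at h4
  rw [show N - (p+1) + (p+1) = N by omega] at h4
  simp at h4
  rcases h4 with h4 | h4
  · omega
  · exact h4

instance AB_fin (m p : ℕ) (b : Bool) : FiniteDimensional ℝ (AB m p b) := by
  let φ : AB m p b →ₗ[ℝ] (Fin m → Polynomial.degreeLT ℝ (p+1)) :=
    { toFun := fun f j => ⟨f.1 j, by
        rw [Polynomial.mem_degreeLT]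
        exact lt_of_le_of_lt Polynomial.degree_le_natDegree
          (by exact_mod_cast AB_natDegree f.2 j)⟩
      map_add' := fun _ _ => rfl
      map_smul' := fun _ _ => rfl }
  have : FiniteDimensional ℝ (Polynomial.degreeLT ℝ (p+1)) :=
    Module.Finite.equiv (Polynomial.degreeLTEquiv ℝ (p+1)).symm
  apply FiniteDimensional.of_injective φ
  rw [← LinearMap.ker_eq_bot, LinearMap.ker_eq_bot']
  intro f hf
  apply Subtype.ext
  funext j
  by_cases h : j < m
  · exact congrArg Subtype.val (congrFun hf ⟨j, h⟩)
  · exact AB_ZZ f.2 j (not_lt.1 h)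

lemma ip_def {m : ℕ} {f : PP} (hf : f ∈ ZZ m) (h : ip m f f = 0) : f = 0 := by
  funext j
  by_cases hj : j < m
  · rw [ip_apply, Finset.sum_eq_zero_iff_of_nonneg (fun _ _ => II_sq_nonneg _)] at h
    exact II_sq_eq_zero (h j (Finset.mem_range.2 hj))
  · exact hf j (not_lt.1 hj)

lemma exists_proj (m p : ℕ) (b : Bool) (f : PP) :
    ∃ w ∈ AB m p b, ∀ z ∈ AB m p b, ip m (f - w) z = 0 := by
  let W := AB m p b
  let ψ : PP →ₗ[ℝ] Module.Dual ℝ W := (Module.Dual.transpose (R := ℝ) W.subtype).comp (ip m)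
  let φ : W →ₗ[ℝ] Module.Dual ℝ W := ψ.comp W.subtype
  have hinj : Function.Injective φ := by
    rw [← LinearMap.ker_eq_bot, LinearMap.ker_eq_bot']
    intro w hw
    apply Subtype.ext
    exact ip_def (AB_ZZ w.2) (LinearMap.congr_fun hw w)
  have hsurj : Function.Surjective φ :=
    (LinearMap.injective_iff_surjective_of_finrank_eq_finrank
      (Subspace.dual_finrank_eq (K := ℝ) (V := W)).symm).1 hinj
  obtain ⟨w, hw⟩ := hsurj (ψ f)
  refine ⟨w, w.2, fun z hz => ?_⟩
  have := LinearMap.congr_fun hw ⟨z, hz⟩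
  have h2 : ip m w z = ip m f z := this
  rw [map_sub, LinearMap.sub_apply, h2, sub_self]

/-- projections are contractive -/
lemma proj_le {m : ℕ} {f w : PP} (h : ip m (f - w) w = 0) :
    ip m w w ≤ ip m f f ∧ ip m (f - w) (f - w) ≤ ip m f f := by
  have h1 := ip_nonneg m (f - w)
  have h2 := ip_nonneg m w
  simp only [map_sub, LinearMap.sub_apply, ip_comm m w f] at *
  constructor <;> linarith

/-- the two-sided approximation step -/
lemma approx_step {m : ℕ} (hm : 1 ≤ m) (p : ℕ) (b : Bool)
    (ih : ∀ f ∈ ZZ m, f ∈ CC m → ((!b) = true → f ∈ BB m) →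
      ∃ g ∈ AB m p (!b), ip m (f - g) (f - g) ≤ 4 * ip m (DD f) (DD f))
    (f : PP) (hz : f ∈ ZZ m) (hc : f ∈ CC m) (hb : b = true → f ∈ BB m) :
    ∃ w ∈ AB m (p+1) b, ip m (f - w) (f - w) ≤ 4 * ip m (DD f) (DD f) ∧
      ip m (DD w) (DD w) ≤ ip m (DD f) (DD f) := by
  obtain ⟨g, hg, hgo⟩ := exists_proj m p (!b) (DD f)
  have hgz := AB_ZZ hg
  -- choose the antiderivative
  have key : ∃ w ∈ AB m (p+1) b, DD w = g ∧
      (b = false → ip m (f - w) (one m) = 0) := by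
    cases b with
    | false =>
      have h1 : ip m (one m) (one m) = m := by
        rw [ip_apply, Finset.sum_congr rfl (g := fun _ => (1:ℝ))]
        · simp
        · intro j hj; simp [one, Finset.mem_range.1 hj, II_apply]
      have hm0 : (m:ℝ) ≠ 0 := by positivity
      let c : ℝ := ip m (f - anti m g) (one m) / m
      have hD : DD (anti m g + c • one m) = g := by simp [DD_anti hgz, DD_one]
      refine ⟨anti m g + c • one m, ?_, hD, ?_⟩
      · rw [AB_succ_iff, hD]
        exact ⟨add_mem (anti_ZZ m g) (Submodule.smul_mem _ _ (one_ZZ m)),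
          add_mem (anti_CC m g) (Submodule.smul_mem _ _ (one_CC m)), by simp, hg⟩
      · intro _
        rw [← sub_sub, map_sub, LinearMap.sub_apply, map_smul, LinearMap.smul_apply, h1]
        simp only [c, smul_eq_mul]
        field_simp
        simp
    | true =>
      have hD := DD_anti hgz
      refine ⟨anti m g, ?_, hD, by simp⟩
      rw [AB_succ_iff, hD]
      refine ⟨anti_ZZ m g, anti_CC m g, fun _ => ⟨anti_left hm g, ?_⟩, hg⟩
      rw [anti_right hm hgz]
      have h1 := hgo (one m) (one_AB m p)
      rw [map_sub, LinearMap.sub_apply] at h1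
      have h2 := ibp hm hc (one_CC m) (Or.inl (hb rfl))
      rw [DD_one] at h2
      simp at h2
      linarith
  obtain ⟨w, hw, hDw, hmean⟩ := key
  have hle := proj_le (hgo g hg)
  refine ⟨w, hw, ?_, by rw [hDw]; exact hle.1⟩
  have hw' := AB_succ_iff.1 hw
  set e := f - w with he
  have hDe : DD e = DD f - g := by rw [he, map_sub, hDw]
  have hez : e ∈ ZZ m := sub_mem hz hw'.1
  have hec : e ∈ CC m := sub_mem hc hw'.2.1
  have hDψ := DD_anti hez
  have hψb : (!b) = true → anti m e ∈ BB m := by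
    intro h
    exact ⟨anti_left hm e, by rw [anti_right hm hez]; exact hmean (by simpa using h)⟩
  obtain ⟨g', hg', hg'e⟩ := ih (anti m e) (anti_ZZ m e) (anti_CC m e) hψb
  rw [hDψ] at hg'e
  have h1 := ibp hm hec (anti_CC m e) (by
    cases b with
    | false => exact Or.inr (hψb rfl)
    | true => exact Or.inl (sub_mem (hb rfl) (hw'.2.2.1 rfl)))
  rw [hDψ] at h1
  have h2 : ip m (DD e) (anti m e - g') = ip m (DD e) (anti m e) := by
    rw [map_sub, hDe, hgo g' hg', sub_zero]
  have h3 := ip_young m (DD e) (anti m e - g') (s := 4) (by norm_num)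
  have h4 := neg_abs_le (ip m (DD e) (anti m e - g'))
  have h5 := hle.2
  rw [← hDe] at h5
  rw [h2] at h3 h4
  linarith

lemma approx {m : ℕ} (hm : 1 ≤ m) : ∀ (p : ℕ) (b : Bool) (f : PP), f ∈ ZZ m → f ∈ CC m →
    (b = true → f ∈ BB m) → ∃ g ∈ AB m p b, ip m (f - g) (f - g) ≤ 4 * ip m (DD f) (DD f) := by
  intro p
  induction p with
  | zero =>
    intro b f hz _ _
    refine ⟨fun j => Polynomial.C ((f j).eval 0), ⟨?_, ?_⟩, ?_⟩
    · intro j hj; simp [hz j hj]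
    · funext j; simp
    · rw [ip_apply, ip_apply, Finset.mul_sum]
      apply Finset.sum_le_sum
      intro j _
      have := II_poincare (f j - Polynomial.C ((f j).eval 0)) (by simp)
      simpa using this
  | succ p ih =>
    intro b f hz hc hb
    obtain ⟨w, h1, h2, _⟩ := approx_step hm p b (ih (!b)) f hz hc hb
    exact ⟨w, h1, h2⟩

theorem stab {m p : ℕ} (hm : 1 ≤ m) (hp : 1 ≤ p) {u v : PP} (hz : u ∈ ZZ m) (hc : u ∈ CC m)
    (hv : v ∈ AB m p false) (ho : ∀ w ∈ AB m p false, ip m (u - v) w = 0) :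
    ip m (DD v) (DD v) ≤ 98 * ip m (DD u) (DD u) ∧
    ip m (DD (u - v)) (DD (u - v)) ≤ 198 * ip m (DD u) (DD u) := by
  obtain ⟨q, rfl⟩ : ∃ q, p = q + 1 := ⟨p - 1, by omega⟩
  obtain ⟨w, hw, h1, h2⟩ := approx_step hm q false (approx hm q true) u hz hc (by simp)
  have h3 := inverse_ineq hm q false (v - w) (sub_mem hv hw)
  have h4 := (proj_le (m := m) (f := u - w) (w := v - w) (by
    rw [sub_sub_sub_cancel_right]; exact ho _ (sub_mem hv hw))).1
  have par : ∀ a b : PP, ip m (a + b) (a + b) ≤ 2 * ip m a a + 2 * ip m b b := by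
    intro a b
    have := ip_nonneg m (a - b)
    simp only [map_sub, map_add, LinearMap.sub_apply, LinearMap.add_apply] at *
    linarith
  have h5 := par (DD (v - w)) (DD w)
  rw [← map_add, sub_add_cancel] at h5
  have h6 := par (DD u) (DD (-v))
  rw [← map_add, ← sub_eq_add_neg] at h6
  have h7 : ip m (DD (-v)) (DD (-v)) = ip m (DD v) (DD v) := by simp
  constructor <;> linarith


/-! ### translation between functions and local polynomial pieces -/

lemma mem_pieceSet {m j : ℕ} (hm : 1 ≤ m) (hj : j < m) (x : ℝ) : x ∈ pieceSet m j ↔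
    (j = 0 ∨ (j:ℝ) ≤ m * x) ∧ (j = m - 1 ∨ (m:ℝ) * x ≤ j + 1) := by
  have hm0 : (0:ℝ) < m := by exact_mod_cast hm
  have e1 : ((m:ℝ) - 1) / m ≤ x ↔ (m:ℝ) - 1 ≤ m * x := by rw [div_le_iff₀ hm0, mul_comm x]
  have e2 : ∀ a : ℝ, a / m ≤ x ↔ a ≤ m * x := fun a => by rw [div_le_iff₀ hm0, mul_comm x]
  have e3 : ∀ a : ℝ, x ≤ a / m ↔ m * x ≤ a := fun a => by rw [le_div_iff₀ hm0, mul_comm x]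
  unfold pieceSet
  by_cases h0 : j = 0 <;> by_cases h1 : j = m - 1
  · have : m = 1 := by omega
    subst this
    simp [h0]
    exact (le_total x 1).imp id (fun h => zero_le_one.trans h)
  · simp [h0, (h0 ▸ h1 : ¬ 0 = m - 1)]
    rw [← one_div, e3]
  · have hc : (j:ℝ) = m - 1 := by rw [h1]; push_cast [hm]; ring
    simp only [if_neg h0, if_pos h1, mem_union, mem_Icc, mem_Ici, e2]
    simp only [h0, false_or]
    rw [hc]
    simp [h1]
    intro h _; exact h
  · simp [h0, h1, e2, e3]

lemma piece_nhds {m j : ℕ} (hm : 1 ≤ m) (hj : j < m) {x : ℝ}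
    (h1 : j = 0 ∨ (j:ℝ) < m * x) (h2 : j = m - 1 ∨ (m:ℝ) * x < j + 1) :
    pieceSet m j ∈ nhds x := by
  have hc : Continuous fun y : ℝ => (m:ℝ) * y := by fun_prop
  have a1 : ∀ᶠ y in nhds x, (j = 0 ∨ (j:ℝ) ≤ m * y) := by
    rcases h1 with h | h
    · simp [h]
    · filter_upwards [hc.continuousAt.eventually (lt_mem_nhds h)] with y hy
      exact Or.inr hy.le
  have a2 : ∀ᶠ y in nhds x, (j = m-1 ∨ (m:ℝ) * y ≤ j + 1) := by
    rcases h2 with h | h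
    · simp [h]
    · filter_upwards [hc.continuousAt.eventually (gt_mem_nhds h)] with y hy
      exact Or.inr hy.le
  filter_upwards [a1, a2] with y h1 h2
  exact (mem_pieceSet hm hj y).2 ⟨h1, h2⟩

lemma piece_right {m : ℕ} (hm : 1 ≤ m) (x : ℝ) :
    ∃ j < m, x ∈ pieceSet m j ∧ pieceSet m j ∈ nhdsWithin x (Ici x) := by
  have hm0 : (0:ℝ) < m := by exact_mod_cast hm
  obtain ⟨j, hj, h1, h2⟩ : ∃ j < m, (j = 0 ∨ (j:ℝ) ≤ m * x) ∧ (j = m - 1 ∨ (m:ℝ) * x < j + 1) := by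
    by_cases h : ⌊(m:ℝ) * x⌋₊ < m
    · refine ⟨_, h, ?_, Or.inr (Nat.lt_floor_add_one _)⟩
      by_cases h0 : ⌊(m:ℝ) * x⌋₊ = 0
      · exact Or.inl h0
      · exact Or.inr ((Nat.le_floor_iff' h0).1 le_rfl)
    · refine ⟨m - 1, by omega, ?_, Or.inl rfl⟩
      by_cases h0 : m - 1 = 0
      · exact Or.inl h0
      · exact Or.inr ((Nat.le_floor_iff' h0).1 (by omega))
  refine ⟨j, hj, (mem_pieceSet hm hj x).2 ⟨h1, h2.imp id le_of_lt⟩, ?_⟩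
  have hc : Continuous fun y : ℝ => (m:ℝ) * y := by fun_prop
  have a2 : ∀ᶠ y in nhds x, (j = m-1 ∨ (m:ℝ) * y ≤ j + 1) := by
    rcases h2 with h | h
    · simp [h]
    · filter_upwards [hc.continuousAt.eventually (gt_mem_nhds h)] with y hy
      exact Or.inr hy.le
  filter_upwards [self_mem_nhdsWithin, mem_nhdsWithin_of_mem_nhds a2] with y hy h2
  exact (mem_pieceSet hm hj y).2 ⟨h1.imp id fun h => h.trans
    (mul_le_mul_of_nonneg_left hy hm0.le), h2⟩

lemma piece_left {m : ℕ} (hm : 1 ≤ m) (x : ℝ) :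
    ∃ j < m, x ∈ pieceSet m j ∧ pieceSet m j ∈ nhdsWithin x (Iic x) := by
  have hm0 : (0:ℝ) < m := by exact_mod_cast hm
  obtain ⟨j, hj, h1, h2⟩ : ∃ j < m, (j = 0 ∨ (j:ℝ) < m * x) ∧ (j = m - 1 ∨ (m:ℝ) * x ≤ j + 1) := by
    by_cases h : ⌈(m:ℝ) * x⌉₊ - 1 < m
    · refine ⟨_, h, ?_, Or.inr ?_⟩
      · by_cases h0 : ⌈(m:ℝ) * x⌉₊ - 1 = 0
        · exact Or.inl h0
        · exact Or.inr (Nat.lt_ceil.1 (by omega))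
      · have := Nat.le_ceil ((m:ℝ) * x)
        have h3 : ((⌈(m:ℝ) * x⌉₊ : ℕ) : ℝ) ≤ ((⌈(m:ℝ) * x⌉₊ - 1 + 1 : ℕ) : ℝ) := by
          exact_mod_cast (by omega)
        push_cast at h3
        linarith
    · exact ⟨m - 1, by omega, Or.inr (Nat.lt_ceil.1 (by omega)), Or.inl rfl⟩
  refine ⟨j, hj, (mem_pieceSet hm hj x).2 ⟨h1.imp id le_of_lt, h2⟩, ?_⟩
  have hc : Continuous fun y : ℝ => (m:ℝ) * y := by fun_prop
  have a1 : ∀ᶠ y in nhds x, (j = 0 ∨ (j:ℝ) ≤ m * y) := by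
    rcases h1 with h | h
    · simp [h]
    · filter_upwards [hc.continuousAt.eventually (lt_mem_nhds h)] with y hy
      exact Or.inr hy.le
  filter_upwards [self_mem_nhdsWithin, mem_nhdsWithin_of_mem_nhds a1] with y hy h1
  exact (mem_pieceSet hm hj y).2 ⟨h1, h2.imp id fun h =>
    (mul_le_mul_of_nonneg_left hy hm0.le).trans h⟩

/-- the function with given local pieces -/
def glue (m : ℕ) (F : PP) (x : ℝ) : ℝ :=
  (F (min ⌊(m:ℝ) * x⌋₊ (m-1))).eval (m * x - (min ⌊(m:ℝ) * x⌋₊ (m-1) : ℕ))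

lemma glue_piece {m : ℕ} (hm : 1 ≤ m) {F : PP} (hF : F ∈ CC m) {j : ℕ} (hj : j < m) {x : ℝ}
    (hx : x ∈ pieceSet m j) : glue m F x = (F j).eval (m * x - j) := by
  rw [mem_pieceSet hm hj] at hx
  obtain ⟨h1, h2⟩ := hx
  unfold glue
  by_cases hj1 : j = m - 1
  · have : min ⌊(m:ℝ) * x⌋₊ (m-1) = j := by
      rw [hj1]
      apply min_eq_right
      rcases h1 with h | h
      · omega
      · rw [← hj1]; exact Nat.le_floor h
    rw [this]
  · have h2 := h2.resolve_left hj1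
    rcases h2.eq_or_lt with h | h
    · have : min ⌊(m:ℝ) * x⌋₊ (m-1) = j + 1 := by
        rw [h, show (j:ℝ) + 1 = ((j+1 : ℕ) : ℝ) by push_cast; rfl, Nat.floor_natCast]
        omega
      rw [this, h]
      have := hF j (by omega)
      simp [this]
    · have : min ⌊(m:ℝ) * x⌋₊ (m-1) = j := by
        have : ⌊(m:ℝ) * x⌋₊ = j := by
          rcases h1 with h0 | h0
          · rw [h0, Nat.floor_eq_zero]; rw [h0] at h; simpa using h
          · exact (Nat.floor_eq_iff (le_trans (by positivity) h0)).2 ⟨h0, h⟩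
        omega
      rw [this]

lemma glue_smul (m : ℕ) (c : ℝ) (F : PP) (x : ℝ) : glue m (c • F) x = c * glue m F x := by
  simp [glue]

lemma glue_hasDerivAt {m : ℕ} (hm : 1 ≤ m) {F : PP} (hF : F ∈ CC m) (hF' : DD F ∈ CC m) (x : ℝ) :
    HasDerivAt (glue m F) (glue m ((m:ℝ) • DD F) x) x := by
  have key : ∀ (s : Set ℝ) (j : ℕ), j < m → x ∈ pieceSet m j → pieceSet m j ∈ nhdsWithin x s →
      HasDerivWithinAt (glue m F) (glue m ((m:ℝ) • DD F) x) s x := by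
    intro s j hj hx hs
    rw [glue_smul, glue_piece hm hF' hj hx]
    have h1 : HasDerivAt (fun y : ℝ => (m:ℝ) * y - j) m x := by
      simpa using ((hasDerivAt_id x).const_mul (m:ℝ)).sub_const (j:ℝ)
    have h2 := ((F j).hasDerivAt ((m:ℝ) * x - j)).comp x h1
    rw [mul_comm] at h2
    refine (h2.hasDerivWithinAt (s := s)).congr_of_eventuallyEq ?_ (glue_piece hm hF hj hx)
    filter_upwards [hs] with y hy
    exact glue_piece hm hF hj hy
  obtain ⟨j, hj, h1, h2⟩ := piece_left hm x
  obtain ⟨k, hk, h3, h4⟩ := piece_right hm x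
  have := (key _ j hj h1 h2).union (key _ k hk h3 h4)
  rwa [Iic_union_Ici, hasDerivWithinAt_univ] at this

lemma glue_continuous {m : ℕ} (hm : 1 ≤ m) {F : PP} (hF : F ∈ CC m) : Continuous (glue m F) := by
  rw [continuous_iff_continuousAt]
  intro x
  have key : ∀ (s : Set ℝ) (j : ℕ), j < m → x ∈ pieceSet m j → pieceSet m j ∈ nhdsWithin x s →
      ContinuousWithinAt (glue m F) s x := by
    intro s j hj hx hs
    have h2 : Continuous fun y : ℝ => (F j).eval ((m:ℝ) * y - j) :=
      (F j).continuous.comp (by fun_prop)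
    refine h2.continuousWithinAt.congr_of_eventuallyEq ?_ (glue_piece hm hF hj hx)
    filter_upwards [hs] with y hy
    exact glue_piece hm hF hj hy
  obtain ⟨j, hj, h1, h2⟩ := piece_left hm x
  obtain ⟨k, hk, h3, h4⟩ := piece_right hm x
  exact continuousAt_iff_continuous_left_right.2 ⟨key _ j hj h1 h2, key _ k hk h3 h4⟩

lemma DD_iter_smul (n : ℕ) (c : ℝ) (F : PP) : (DD^[n]) (c • F) = c • (DD^[n]) F := by
  rw [← Module.End.pow_apply, ← Module.End.pow_apply, map_smul]

lemma glue_contDiff {m : ℕ} (hm : 1 ≤ m) : ∀ (n : ℕ) (F : PP), (∀ k ≤ n, (DD^[k]) F ∈ CC m) →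
    ContDiff ℝ n (glue m F) ∧ iteratedDeriv n (glue m F) = glue m ((m:ℝ)^n • (DD^[n]) F) := by
  intro n
  induction n with
  | zero =>
    intro F h
    have := glue_continuous hm (h 0 le_rfl)
    simpa using this
  | succ n ih =>
    intro F h
    have hd := glue_hasDerivAt hm (h 0 (by omega)) (h 1 (by omega))
    have hderiv : deriv (glue m F) = glue m ((m:ℝ) • DD F) := funext fun x => (hd x).deriv
    obtain ⟨h1, h2⟩ := ih ((m:ℝ) • DD F) (by
      intro k hk
      rw [DD_iter_smul]
      exact Submodule.smul_mem _ _ (h (k+1) (by omega)))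
    constructor
    · push_cast
      rw [contDiff_succ_iff_deriv]
      refine ⟨fun x => (hd x).differentiableAt, by simp, ?_⟩
      rw [hderiv]; exact h1
    · rw [iteratedDeriv_succ', hderiv, h2, DD_iter_smul, smul_smul, ← pow_succ]
      rfl

lemma glue_spline0 {m p : ℕ} (hm : 1 ≤ m) (hp : 1 ≤ p) {F : PP} (hF : F ∈ AB m p false) :
    IsSpline0 m p (glue m F) := by
  have hA := AB_iff.1 hF
  refine ⟨⟨(glue_contDiff hm (p-1) F fun k hk => (hA.2.2 k (by omega)).1).1.contDiffOn, ?_⟩, ?_⟩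
  · intro j hj
    refine ⟨(F j).comp (Polynomial.C (m:ℝ) * Polynomial.X - Polynomial.C (j:ℝ)), ?_, ?_⟩
    · rw [Polynomial.natDegree_comp]
      have h1 := AB_natDegree hF j
      have h2 : (Polynomial.C (m:ℝ) * Polynomial.X - Polynomial.C (j:ℝ)).natDegree ≤ 1 := by
        compute_degree
      calc _ ≤ p * 1 := Nat.mul_le_mul (by omega) h2
        _ = p := mul_one p
    · intro x hx
      have hc : F ∈ CC m := (hA.2.2 0 (by omega)).1
      rw [glue_piece hm hc hj hx]
      simp
  · intro l hl
    have hB : (DD^[2*l+1]) F ∈ BB m := (hA.2.2 _ hl).2 (by simp)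
    rw [(glue_contDiff hm (2*l+1) F fun k hk => (hA.2.2 k (by omega)).1).2, glue_smul, glue_smul]
    have e0 : glue m ((DD^[2*l+1]) F) 0 = 0 := by
      have := hB.1
      simp only [glue]
      simpa using this
    have e1 : glue m ((DD^[2*l+1]) F) 1 = 0 := by
      have := hB.2
      simp only [glue]
      rw [mul_one, Nat.floor_natCast, min_eq_right (by omega)]
      push_cast [hm]
      simpa using this
    rw [e0, e1]
    simp

/-- `F` are the local pieces of `u`. -/
def Rep (m : ℕ) (u : ℝ → ℝ) (F : PP) : Prop :=
  ∀ j < m, ∀ t ∈ Icc (0:ℝ) 1, u ((j + t) / m) = (F j).eval t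

lemma Rep.sub {m : ℕ} {u v : ℝ → ℝ} {F G : PP} (h1 : Rep m u F) (h2 : Rep m v G) :
    Rep m (u - v) (F - G) := by
  intro j hj t ht
  simp [h1 j hj t ht, h2 j hj t ht]

lemma mem_piece_t {m j : ℕ} (hm : 1 ≤ m) (hj : j < m) {t : ℝ} (ht : t ∈ Icc (0:ℝ) 1) :
    ((j:ℝ) + t) / m ∈ pieceSet m j := by
  have hm0 : (m:ℝ) ≠ 0 := by positivity
  rw [mem_pieceSet hm hj, mul_div_cancel₀ _ hm0]
  exact ⟨Or.inr (by linarith [ht.1]), Or.inr (by linarith [ht.2])⟩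

lemma glue_rep {m : ℕ} (hm : 1 ≤ m) {F : PP} (hF : F ∈ CC m) : Rep m (glue m F) F := by
  intro j hj t ht
  have hm0 : (m:ℝ) ≠ 0 := by positivity
  rw [glue_piece hm hF hj (mem_piece_t hm hj ht), mul_div_cancel₀ _ hm0]
  simp

lemma Rep.cc {m : ℕ} {u : ℝ → ℝ} {F : PP} (h : Rep m u F) : F ∈ CC m := by
  intro j hj
  rw [← h j (by omega) 1 (by simp), ← h (j+1) hj 0 (by simp)]
  push_cast; simp

lemma integral_rep {m : ℕ} (hm : 1 ≤ m) {g : ℝ → ℝ} {G : PP}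
    (h : ∀ j < m, ∀ t ∈ Ioo (0:ℝ) 1, g ((j + t) / m) = (G j).eval t) :
    ∫ x in Ioo (0:ℝ) 1, g x = (m:ℝ)⁻¹ * ∑ j ∈ Finset.range m, II (G j) := by
  have hm0 : (m:ℝ) ≠ 0 := by positivity
  have hmp : (0:ℝ) < m := by positivity
  rw [← integral_Ioc_eq_integral_Ioo, ← intervalIntegral.integral_of_le zero_le_one]
  let a : ℕ → ℝ := fun k => k / m
  have hle : ∀ k, a k ≤ a (k+1) := fun k => by simp only [a]; gcongr; omega
  have heq : ∀ k < m, EqOn (fun x : ℝ => (G k).eval ((m:ℝ) * x - k)) g (Ioo (a k) (a (k+1))) := by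
    intro k hk x hx
    have h1 : (k:ℝ) < m * x := by
      have := hx.1; simp only [a] at this; rwa [div_lt_iff₀ hmp, mul_comm] at this
    have h2 : (m:ℝ) * x < k + 1 := by
      have := hx.2; simp only [a] at this; push_cast at this; rwa [lt_div_iff₀ hmp, mul_comm] at this
    have := h k hk (m * x - k) ⟨by linarith, by linarith⟩
    simp only
    rw [← this]
    congr 1
    field_simp
    ring
  have hcont : ∀ k : ℕ, Continuous fun x : ℝ => (G k).eval ((m:ℝ) * x - k) := fun k =>
    (G k).continuous.comp (by fun_prop)
  have hsum := intervalIntegral.sum_integral_adjacent_intervals (f := g) (μ := volume) (a := a)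
    (n := m) (fun k hk => by
      refine ((hcont k).intervalIntegrable _ _).congr_uIoo ?_
      rw [uIoo_of_le (hle k)]
      exact heq k hk)
  have ea : a 0 = 0 := by simp [a]
  have eb : a m = 1 := by simp [a, hm0]
  rw [ea, eb] at hsum
  rw [← hsum, Finset.mul_sum]
  apply Finset.sum_congr rfl
  intro k hk
  rw [← intervalIntegral.integral_congr_Ioo_of_le (hle k) (heq k (Finset.mem_range.1 hk))]
  rw [intervalIntegral.integral_comp_mul_sub (f := fun y => (G k).eval y) hm0, II_apply, smul_eq_mul]
  have e1 : (m:ℝ) * a k - k = 0 := by simp only [a]; field_simp; ring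
  have e2 : (m:ℝ) * a (k+1) - k = 1 := by simp only [a]; push_cast; field_simp; ring
  rw [e1, e2]

lemma Rep.ip0 {m : ℕ} (hm : 1 ≤ m) {u v : ℝ → ℝ} {F G : PP} (h1 : Rep m u F) (h2 : Rep m v G) :
    ip0 u v = (m:ℝ)⁻¹ * ip m F G := by
  unfold SplineMG.ip0
  rw [ip_apply]
  apply integral_rep hm (G := F * G)
  intro j hj t ht
  have ht' := Ioo_subset_Icc_self ht
  simp [h1 j hj t ht', h2 j hj t ht']

lemma Rep.l2 {m : ℕ} (hm : 1 ≤ m) {u : ℝ → ℝ} {F : PP} (h1 : Rep m u F) :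
    l2normSq u = (m:ℝ)⁻¹ * ip m F F := by
  rw [← h1.ip0 hm h1]
  simp [l2normSq, SplineMG.ip0, sq]

lemma Rep.h1 {m : ℕ} (hm : 1 ≤ m) {u : ℝ → ℝ} {F : PP} (h1 : Rep m u F) :
    h1semiSq u = m * ip m (DD F) (DD F) := by
  have hm0 : (m:ℝ) ≠ 0 := by positivity
  have hmp : (0:ℝ) < m := by positivity
  have := integral_rep hm (g := fun x => deriv u x ^ 2)
    (G := ((m:ℝ)^2) • (DD F * DD F)) (by
      intro j hj t ht
      set x := ((j:ℝ) + t) / m with hx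
      have hxm : (m:ℝ) * x = j + t := by rw [hx, mul_div_cancel₀ _ hm0]
      have h3 : HasDerivAt (fun y : ℝ => (m:ℝ) * y - j) m x := by
        simpa using ((hasDerivAt_id x).const_mul (m:ℝ)).sub_const (j:ℝ)
      have h2 := ((F j).hasDerivAt ((m:ℝ) * x - j)).comp x h3
      have hev : u =ᶠ[nhds x] (fun y => (F j).eval y) ∘ (fun y : ℝ => (m:ℝ) * y - j) := by
        have hc : ContinuousAt (fun y : ℝ => (m:ℝ) * y - j) x := by fun_prop
        have hmem : Ioo (0:ℝ) 1 ∈ nhds ((m:ℝ) * x - j) := by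
          rw [hxm, add_sub_cancel_left]; exact Ioo_mem_nhds ht.1 ht.2
        filter_upwards [hc hmem] with y hy
        have := h1 j hj _ (Ioo_subset_Icc_self hy)
        simp only [Function.comp]
        rw [← this]
        congr 1
        field_simp
        ring
      rw [hev.deriv_eq, h2.deriv, hxm]
      simp
      ring)
  unfold h1semiSq
  rw [this, ip_apply]
  simp only [Pi.smul_apply, Pi.mul_apply, map_smul, smul_eq_mul, ← Finset.mul_sum]
  field_simp

lemma poly_iter (n : ℕ) : ∀ q : Polynomial ℝ,
    iteratedDeriv n (fun x => q.eval x) = fun x => (Polynomial.derivative^[n] q).eval x := by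
  induction n with
  | zero => intro q; simp
  | succ n ih =>
    intro q
    rw [iteratedDeriv_succ', Function.iterate_succ_apply, ← ih]
    congr 1
    funext x
    simp

lemma iter_comp (a b : ℝ) (n : ℕ) : ∀ q : Polynomial ℝ,
    Polynomial.derivative^[n] (q.comp (Polynomial.C a * (Polynomial.X + Polynomial.C b))) =
      Polynomial.C (a^n) * (Polynomial.derivative^[n] q).comp
        (Polynomial.C a * (Polynomial.X + Polynomial.C b)) := by
  induction n with
  | zero => intro q; simp
  | succ n ih =>
    intro q
    rw [Function.iterate_succ_apply, Function.iterate_succ_apply, Polynomial.derivative_comp]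
    have : Polynomial.derivative (Polynomial.C a * (Polynomial.X + Polynomial.C b)) =
      Polynomial.C a := by simp
    rw [this, Polynomial.iterate_derivative_C_mul, ih, ← mul_assoc, ← Polynomial.C_mul, pow_succ']

lemma DD_iter_apply (f : PP) (j k : ℕ) : (DD^[k]) f j = Polynomial.derivative^[k] (f j) := by
  induction k with
  | zero => rfl
  | succ k ih => rw [Function.iterate_succ_apply', Function.iterate_succ_apply', ← ih]; rfl

/-- local pieces from global polynomial pieces -/
def loc (m : ℕ) (q : ℕ → Polynomial ℝ) : PP := fun j =>
  if j < m then (q j).comp (Polynomial.C ((m:ℝ)⁻¹) * (Polynomial.X + Polynomial.C (j:ℝ))) else 0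

lemma loc_ZZ (m : ℕ) (q : ℕ → Polynomial ℝ) : loc m q ∈ ZZ m := by
  intro j hj; simp [loc, not_lt.2 hj]

lemma loc_eval {m : ℕ} (q : ℕ → Polynomial ℝ) {j : ℕ} (hj : j < m) (k : ℕ) (t : ℝ) :
    ((DD^[k]) (loc m q) j).eval t =
      ((m:ℝ)⁻¹)^k * (Polynomial.derivative^[k] (q j)).eval ((j + t) / m) := by
  rw [DD_iter_apply, loc, if_pos hj, iter_comp]
  simp only [Polynomial.eval_mul, Polynomial.eval_comp, Polynomial.eval_C, Polynomial.eval_add,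
    Polynomial.eval_X]
  congr 2
  rw [div_eq_inv_mul, add_comm]

lemma exists_pieces {m p : ℕ} {u : ℝ → ℝ} (hu : IsSpline m p u) :
    ∃ q : ℕ → Polynomial ℝ, ∀ j < m, (q j).natDegree ≤ p ∧
      ∀ x ∈ pieceSet m j, u x = (q j).eval x := by
  have : ∀ j, ∃ q : Polynomial ℝ, j < m → q.natDegree ≤ p ∧ ∀ x ∈ pieceSet m j, u x = q.eval x := by
    intro j
    by_cases hj : j < m
    · obtain ⟨q, hq⟩ := hu.2 j hj
      exact ⟨q, fun _ => hq⟩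
    · exact ⟨0, fun h => absurd h hj⟩
  choose q hq using this
  exact ⟨q, hq⟩

lemma loc_rep {m p : ℕ} (hm : 1 ≤ m) {u : ℝ → ℝ} {q : ℕ → Polynomial ℝ}
    (hq : ∀ j < m, (q j).natDegree ≤ p ∧ ∀ x ∈ pieceSet m j, u x = (q j).eval x) :
    Rep m u (loc m q) := by
  intro j hj t ht
  have := loc_eval q hj 0 t
  simp at this
  rw [this]
  exact (hq j hj).2 _ (mem_piece_t hm hj ht)

lemma loc_AB {m p : ℕ} (hm : 1 ≤ m) {u : ℝ → ℝ} (hu : IsSpline0 m p u)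
    {q : ℕ → Polynomial ℝ}
    (hq : ∀ j < m, (q j).natDegree ≤ p ∧ ∀ x ∈ pieceSet m j, u x = (q j).eval x) :
    loc m q ∈ AB m p false := by
  have hm0 : (m:ℝ) ≠ 0 := by positivity
  have hmp : (0:ℝ) < m := by positivity
  have hder : ∀ j < m, ∀ k x, pieceSet m j ∈ nhds x →
      iteratedDeriv k u x = (Polynomial.derivative^[k] (q j)).eval x := by
    intro j hj k x hx
    have : u =ᶠ[nhds x] fun y => (q j).eval y := by
      filter_upwards [hx] with y hy using (hq j hj).2 y hy
    rw [this.iteratedDeriv_eq, poly_iter]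
  rw [AB_iff]
  refine ⟨loc_ZZ m q, ?_, ?_⟩
  · funext j
    rw [DD_iter_apply]
    apply Polynomial.iterate_derivative_eq_zero
    by_cases hj : j < m
    · rw [loc, if_pos hj, Polynomial.natDegree_comp]
      have h2 : (Polynomial.C ((m:ℝ)⁻¹) * (Polynomial.X + Polynomial.C (j:ℝ))).natDegree ≤ 1 := by
        compute_degree
      have := Nat.mul_le_mul (hq j hj).1 h2
      omega
    · simp [loc, hj]
  · intro k hk
    constructor
    · intro j hj
      rw [loc_eval q (by omega), loc_eval q hj]
      congr 1
      let g := iteratedDerivWithin k u (Ioo (0:ℝ) 1)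
      have hg : ContinuousOn g (Ioo (0:ℝ) 1) :=
        hu.1.1.continuousOn_iteratedDerivWithin (by exact_mod_cast (by omega)) isOpen_Ioo.uniqueDiffOn
      have hgt : ∀ i < m, ∀ t ∈ Ioo (0:ℝ) 1,
          g ((i + t)/m) = (Polynomial.derivative^[k] (q i)).eval ((i + t)/m) := by
        intro i hi t ht
        have hi' : (i:ℝ) + 1 ≤ m := by exact_mod_cast hi
        have hx : ((i:ℝ) + t) / m ∈ Ioo (0:ℝ) 1 := by
          refine ⟨div_pos (by have := ht.1; positivity) hmp, ?_⟩
          rw [div_lt_one hmp]; linarith [ht.2]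
        rw [← hder i hi k _ (piece_nhds hm hi (Or.inr ?_) (Or.inr ?_))]
        · exact iteratedDerivWithin_of_isOpen isOpen_Ioo hx
        · rw [mul_div_cancel₀ _ hm0]; linarith [ht.1]
        · rw [mul_div_cancel₀ _ hm0]; linarith [ht.2]
      have hj' : (j:ℝ) + 1 < m := by exact_mod_cast hj
      have hx : ((j:ℝ) + 1) / m ∈ Ioo (0:ℝ) 1 :=
        ⟨by positivity, by rw [div_lt_one hmp]; exact hj'⟩
      have hgc : ContinuousAt g (((j:ℝ) + 1) / m) := hg.continuousAt (isOpen_Ioo.mem_nhds hx)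
      have hpc : ∀ i : ℕ, Continuous fun t : ℝ =>
          (Polynomial.derivative^[k] (q i)).eval (((i:ℝ) + t)/m) := fun i =>
        (Polynomial.derivative^[k] (q i)).continuous.comp (by fun_prop)
      have L : g (((j:ℝ) + 1) / m) =
          (Polynomial.derivative^[k] (q j)).eval (((j:ℝ) + 1)/m) := by
        have c1 : Filter.Tendsto (fun t : ℝ => g (((j:ℝ) + t)/m)) (nhdsWithin 1 (Iio 1))
            (nhds (g (((j:ℝ) + 1) / m))) := by
          have : ContinuousAt (fun t : ℝ => g (((j:ℝ) + t)/m)) 1 :=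
            ContinuousAt.comp (f := fun t : ℝ => ((j:ℝ) + t)/m) hgc (by fun_prop)
          exact this.tendsto.mono_left nhdsWithin_le_nhds
        have c2 := ((hpc j).continuousAt (x := 1)).tendsto.mono_left
          (nhdsWithin_le_nhds (s := Iio (1:ℝ)))
        refine tendsto_nhds_unique_of_eventuallyEq c1 c2 ?_
        filter_upwards [Ioo_mem_nhdsLT (zero_lt_one (α := ℝ))] with t ht
        exact hgt j (by omega) t ht
      have R : g (((j:ℝ) + 1) / m) =
          (Polynomial.derivative^[k] (q (j+1))).eval ((((j+1:ℕ):ℝ) + 0)/m) := by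
        have hgc' : ContinuousAt g ((((j+1:ℕ):ℝ) + 0) / m) := by
          push_cast; rw [add_zero]; exact hgc
        have c1 : Filter.Tendsto (fun t : ℝ => g ((((j+1:ℕ):ℝ) + t)/m)) (nhdsWithin 0 (Ioi 0))
            (nhds (g ((((j+1:ℕ):ℝ) + 0) / m))) := by
          have : ContinuousAt (fun t : ℝ => g ((((j+1:ℕ):ℝ) + t)/m)) 0 :=
            ContinuousAt.comp (f := fun t : ℝ => (((j+1:ℕ):ℝ) + t)/m) hgc' (by fun_prop)
          exact this.tendsto.mono_left nhdsWithin_le_nhds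
        have c2 := ((hpc (j+1)).continuousAt (x := 0)).tendsto.mono_left
          (nhdsWithin_le_nhds (s := Ioi (0:ℝ)))
        have := tendsto_nhds_unique_of_eventuallyEq c1 c2 (by
          filter_upwards [Ioo_mem_nhdsGT (zero_lt_one (α := ℝ))] with t ht
          exact hgt (j+1) hj t ht)
        rw [← this]
        push_cast; rw [add_zero]
      rw [← L, R]
    · intro hpar
      have hodd : Odd k := by
        rw [← Nat.not_even_iff_odd]; intro h; exact absurd (hpar.2 h) (by simp)
      obtain ⟨l, rfl⟩ := hodd
      obtain ⟨d0, d1⟩ := hu.2 l hk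
      constructor
      · rw [loc_eval q (by omega), ← hder 0 (by omega)]
        · simp [d0]
        · exact piece_nhds hm (by omega) (Or.inl rfl) (Or.inr (by simp))
      · have e : (((m-1:ℕ):ℝ) + 1) / m = 1 := by
          push_cast [hm]; field_simp; ring
        rw [loc_eval q (by omega), e, ← hder (m-1) (by omega), d1, mul_zero]
        refine piece_nhds hm (by omega) (Or.inr ?_) (Or.inl rfl)
        push_cast [hm]; linarith

/-- in the spectral sense on `S`, `M₀ + M₁ = M` and
`K₀ + K₁ ≤ c·K` with `c` independent of `h` and `p`; consequently `K_β ≤ c·K` and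
`M_β ≤ M` for `β ∈ {0,1}`.  In quadratic forms (with `v = Q₀u`, so `Q₁u = u − v`):
`‖Q₀u‖₀² + ‖Q₁u‖₀² = ‖u‖₀²`, `|Q₀u|₁² + |Q₁u|₁² ≤ c|u|₁²`, and the individual
bounds `|Q_βu|₁² ≤ c|u|₁²`, `‖Q_βu‖₀² ≤ ‖u‖₀²`. -/
theorem mass_stiffness_splitting_bounds :
    ∃ c : ℝ, 0 < c ∧ ∀ m p : ℕ, 1 ≤ m → 1 ≤ p →
      ∀ u v : ℝ → ℝ, IsSpline m p u → IsL2Proj0 m p u v →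
        (l2normSq v + l2normSq (u - v) = l2normSq u) ∧
        (h1semiSq v + h1semiSq (u - v) ≤ c * h1semiSq u) ∧
        (h1semiSq v ≤ c * h1semiSq u ∧ h1semiSq (u - v) ≤ c * h1semiSq u) ∧
        (l2normSq v ≤ l2normSq u ∧ l2normSq (u - v) ≤ l2normSq u) := by
  refine ⟨296, by norm_num, ?_⟩
  intro m p hm hp u v hu hv
  have hmp : (0:ℝ) < m := by positivity
  obtain ⟨q, hq⟩ := exists_pieces hu
  obtain ⟨r, hr⟩ := exists_pieces hv.1.1
  have hU := loc_rep hm hq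
  have hV := loc_rep hm hr
  have hVA := loc_AB hm hv.1 hr
  have ho : ∀ w ∈ AB m p false, ip m (loc m q - loc m r) w = 0 := by
    intro w hw
    have hwc : w ∈ CC m := ((AB_iff.1 hw).2.2 0 (by omega)).1
    have h1 := hv.2 _ (glue_spline0 hm hp hw)
    rw [(hU.sub hV).ip0 hm (glue_rep hm hwc)] at h1
    exact (mul_eq_zero.1 h1).resolve_left (inv_ne_zero hmp.ne')
  obtain ⟨s1, s2⟩ := stab hm hp (loc_ZZ m q) hU.cc hVA ho
  have hpy : l2normSq v + l2normSq (u - v) = l2normSq u := by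
    rw [hV.l2 hm, (hU.sub hV).l2 hm, hU.l2 hm, ← mul_add]
    congr 1
    have h1 := ho _ hVA
    simp only [map_sub, LinearMap.sub_apply, ip_comm m (loc m r) (loc m q)] at *
    linarith
  have nn : ∀ f : ℝ → ℝ, 0 ≤ l2normSq f := fun f => integral_nonneg fun x => sq_nonneg _
  have nh : ∀ f : ℝ → ℝ, 0 ≤ h1semiSq f := fun f => integral_nonneg fun x => sq_nonneg _
  have t1 : h1semiSq v ≤ 98 * h1semiSq u := by
    rw [hV.h1 hm, hU.h1 hm]
    nlinarith [mul_le_mul_of_nonneg_left s1 hmp.le]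
  have t2 : h1semiSq (u - v) ≤ 198 * h1semiSq u := by
    rw [(hU.sub hV).h1 hm, hU.h1 hm]
    nlinarith [mul_le_mul_of_nonneg_left s2 hmp.le]
  refine ⟨hpy, by linarith, ⟨by linarith [nh u], by linarith [nh u]⟩, ?_, ?_⟩ <;>
    linarith [nn v, nn (u - v)]

end SplineMG
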